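/- Let n ≥ 2 be an integer and consider modules over the ring ℤ/nℤ. Suppose given ℤ/n-modules M₀, M₁, M₂, M₃, M₄ and ℤ/n-linear maps φ₁ : M₀ → M₁, φ₂ : M₁ → M₂, φ₃ : M₂ → M₃, φ₄ : M₃ → M₄ such that φ₁ is injective, im(φ₁) = ker(φ₂), im(φ₂) = ker(φ₃), and im(φ₃) = ker(φ₄). Assume that M₀, M₁, M₂ are finite free ℤ/n-modules, say M₀ ≅ (ℤ/n)^{r₀}, M₁ ≅ (ℤ/n)^{r₁}, M₂ ≅ (ℤ/n)^{r₂}. Then r₀ + r₂ ≥ r₁, the submodule ker(φ₄) of M₃ is a free ℤ/n-module of rank r₀ + r₂ − r₁, and ker(φ₄) is a direct summand of M₃: there is a submodule Γ of M₃ with M₃ = ker(φ₄) ⊕ Γ (internal direct sum), and Γ is isomorphic to im(φ₄). -/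

import Mathlib

theorem zmod_baer (n : ℕ) (hn : 2 ≤ n) : Module.Baer (ZMod n) (ZMod n) := by
  intro I g
  obtain ⟨d, hd⟩ := (IsPrincipalIdealRing.principal (I.comap (Int.castRingHom (ZMod n)))).principal
  have hmem : ∀ z : ℤ, ((z : ZMod n) ∈ I) ↔ d ∣ z := by
    intro z
    have : z ∈ I.comap (Int.castRingHom (ZMod n)) ↔ d ∣ z := by
      rw [hd]; exact Ideal.mem_span_singleton
    simpa using this
  have hdI : (d : ZMod n) ∈ I := (hmem d).2 dvd_rfl
  obtain ⟨m, hm⟩ : d ∣ (n : ℤ) := (hmem n).1 (by simp)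
  have hm0 : m ≠ 0 := by
    rintro rfl
    simp at hm; omega
  obtain ⟨y, hy⟩ := ZMod.intCast_surjective (g ⟨(d : ZMod n), hdI⟩)
  have hmy : ((m * y : ℤ) : ZMod n) = 0 := by
    push_cast
    rw [hy, ← smul_eq_mul, ← map_smul]
    have : ((m : ZMod n) • (⟨(d : ZMod n), hdI⟩ : I)) = 0 := by
      ext
      have : ((d * m : ℤ) : ZMod n) = 0 := by rw [← hm]; simp
      push_cast at this
      simpa [mul_comm] using this
    rw [this, map_zero]
  rw [ZMod.intCast_zmod_eq_zero_iff_dvd, hm, mul_comm d m] at hmy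
  obtain ⟨c, hc⟩ := (mul_dvd_mul_iff_left hm0).1 hmy
  refine ⟨LinearMap.mulRight (ZMod n) (c : ZMod n), ?_⟩
  intro x hx
  obtain ⟨z, rfl⟩ := ZMod.intCast_surjective x
  obtain ⟨k, rfl⟩ := (hmem z).1 hx
  have : (⟨((d * k : ℤ) : ZMod n), hx⟩ : I) = (k : ZMod n) • (⟨(d : ZMod n), hdI⟩ : I) := by
    ext; simp [mul_comm]
  rw [this, map_smul, ← hy, hc]
  simp; ring

theorem zmod_split (n : ℕ) (hn : 2 ≤ n) {A B : Type*} [AddCommGroup A] [AddCommGroup B]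
    [Module (ZMod n) A] [Module (ZMod n) B] (a : ℕ) (e : A ≃ₗ[ZMod n] (Fin a → ZMod n))
    (f : A →ₗ[ZMod n] B) (hf : Function.Injective f) :
    ∃ q : Submodule (ZMod n) B, IsCompl (LinearMap.range f) q := by
  choose l hl using fun i => (zmod_baer n hn).extension_property f hf
    ((LinearMap.proj i).comp e.toLinearMap)
  let r : B →ₗ[ZMod n] A := e.symm.toLinearMap ∘ₗ LinearMap.pi l
  have hr : ∀ x, r (f x) = x := by
    intro x
    simp only [r, LinearMap.comp_apply, LinearEquiv.coe_coe]
    rw [LinearEquiv.symm_apply_eq]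
    ext i
    exact DFunLike.congr_fun (hl i) x
  refine ⟨_, LinearMap.isCompl_of_proj (f := f.rangeRestrict ∘ₗ r) ?_⟩
  rintro ⟨_, x, rfl⟩
  ext
  simp [hr]

open TensorProduct in
theorem zmod_cancel (n : ℕ) (hn : 2 ≤ n) {N : Type*} [AddCommGroup N] [Module (ZMod n) N]
    (a b : ℕ) (e : ((Fin a → ZMod n) × N) ≃ₗ[ZMod n] (Fin b → ZMod n)) :
    a ≤ b ∧ Nonempty (N ≃ₗ[ZMod n] (Fin (b - a) → ZMod n)) := by
  have : NeZero n := ⟨by omega⟩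
  have : Fact (1 < n) := ⟨by omega⟩
  have hs : Function.Surjective (LinearMap.snd (ZMod n) (Fin a → ZMod n) N ∘ₗ e.symm.toLinearMap) :=
    (Prod.snd_surjective (α := Fin a → ZMod n) (β := N)).comp e.symm.surjective
  have : Module.Finite (ZMod n) N := Module.Finite.of_surjective _ hs
  have : Module.Projective (ZMod n) ((Fin a → ZMod n) × N) := Module.Projective.of_equiv e.symm
  have : Module.Projective (ZMod n) N :=
    Module.Projective.of_split (LinearMap.inr (ZMod n) (Fin a → ZMod n) N)
      (LinearMap.snd (ZMod n) (Fin a → ZMod n) N) (by ext; simp)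
  have key : ∀ P : MaximalSpectrum (ZMod n),
      a + Module.finrank (ZMod n ⧸ P.1) ((ZMod n ⧸ P.1) ⊗[ZMod n] N) = b := by
    intro P
    letI := Ideal.Quotient.field P.1
    have e1 := (TensorProduct.prodRight (ZMod n) (ZMod n ⧸ P.1) (ZMod n ⧸ P.1)
      (Fin a → ZMod n) N).symm.trans (e.baseChange (ZMod n) (ZMod n ⧸ P.1) _ _)
    have h := e1.finrank_eq
    rw [Module.finrank_prod] at h
    simpa [Module.finrank_baseChange] using h
  have ⟨P, hP⟩ := Ideal.exists_maximal (ZMod n)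
  have h0 := key ⟨P, hP⟩
  refine ⟨by omega, ?_⟩
  obtain ⟨bb⟩ := Module.nonempty_basis_of_flat_of_finrank_eq (ZMod n) N (b - a)
    (fun P => by have := key P; omega)
  exact ⟨bb.equivFun⟩

theorem zmod_step (n : ℕ) (hn : 2 ≤ n) {A B C : Type*} [AddCommGroup A] [AddCommGroup B]
    [AddCommGroup C] [Module (ZMod n) A] [Module (ZMod n) B] [Module (ZMod n) C] (a b : ℕ)
    (eA : A ≃ₗ[ZMod n] (Fin a → ZMod n)) (eB : B ≃ₗ[ZMod n] (Fin b → ZMod n))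
    (f : A →ₗ[ZMod n] B) (hf : Function.Injective f) (g : B →ₗ[ZMod n] C)
    (h : LinearMap.range f = LinearMap.ker g) :
    a ≤ b ∧ Nonempty (LinearMap.range g ≃ₗ[ZMod n] (Fin (b - a) → ZMod n)) := by
  obtain ⟨q, hq⟩ := zmod_split n hn a eA f hf
  have e1 : q ≃ₗ[ZMod n] LinearMap.range g :=
    (Submodule.quotientEquivOfIsCompl _ q hq).symm.trans
      ((Submodule.quotEquivOfEq _ _ h).trans g.quotKerEquivRange)
  have e2 := Submodule.prodEquivOfIsCompl _ q hq
  exact zmod_cancel n hn a b ((((eA.symm.trans (LinearEquiv.ofInjective f hf)).prodCongr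
    e1.symm).trans e2).trans eB)


/-- **Free complements in exact sequences of `ℤ/n`-modules** (Brussel–Tengan).
Given an exact sequence `0 → M₀ → M₁ → M₂ → M₃ → M₄` of `ℤ/n`-modules (`n ≥ 2`) whose
first three terms are finite free of ranks `r₀`, `r₁`, `r₂`, one has `r₁ ≤ r₀ + r₂`, the
kernel of `φ₄ : M₃ → M₄` is a free `ℤ/n`-module of rank `r₀ + r₂ - r₁`, and it is a direct
summand of `M₃` with a complement `Γ` isomorphic to the image of `φ₄`. -/
theorem exists_free_kernel_and_complement
    (n : ℕ) (hn : 2 ≤ n)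
    (M₀ M₁ M₂ M₃ M₄ : Type*)
    [AddCommGroup M₀] [AddCommGroup M₁] [AddCommGroup M₂] [AddCommGroup M₃] [AddCommGroup M₄]
    [Module (ZMod n) M₀] [Module (ZMod n) M₁] [Module (ZMod n) M₂] [Module (ZMod n) M₃]
    [Module (ZMod n) M₄]
    (φ₁ : M₀ →ₗ[ZMod n] M₁) (φ₂ : M₁ →ₗ[ZMod n] M₂) (φ₃ : M₂ →ₗ[ZMod n] M₃)
    (φ₄ : M₃ →ₗ[ZMod n] M₄)
    (hφ₁ : Function.Injective φ₁)
    (h₁₂ : LinearMap.range φ₁ = LinearMap.ker φ₂)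
    (h₂₃ : LinearMap.range φ₂ = LinearMap.ker φ₃)
    (h₃₄ : LinearMap.range φ₃ = LinearMap.ker φ₄)
    (r₀ r₁ r₂ : ℕ)
    (e₀ : Nonempty (M₀ ≃ₗ[ZMod n] (Fin r₀ → ZMod n)))
    (e₁ : Nonempty (M₁ ≃ₗ[ZMod n] (Fin r₁ → ZMod n)))
    (e₂ : Nonempty (M₂ ≃ₗ[ZMod n] (Fin r₂ → ZMod n))) :
    r₁ ≤ r₀ + r₂ ∧
    Nonempty ((LinearMap.ker φ₄) ≃ₗ[ZMod n] (Fin (r₀ + r₂ - r₁) → ZMod n)) ∧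
    ∃ Γ : Submodule (ZMod n) M₃,
      IsCompl (LinearMap.ker φ₄) Γ ∧ Nonempty (Γ ≃ₗ[ZMod n] LinearMap.range φ₄) := by
  obtain ⟨e₀⟩ := e₀
  obtain ⟨e₁⟩ := e₁
  obtain ⟨e₂⟩ := e₂
  obtain ⟨h01, ⟨f⟩⟩ := zmod_step n hn r₀ r₁ e₀ e₁ φ₁ hφ₁ φ₂ h₁₂
  obtain ⟨h12, ⟨g⟩⟩ := zmod_step n hn (r₁ - r₀) r₂ f e₂ (LinearMap.range φ₂).subtype
    (Submodule.injective_subtype _) φ₃ (by rw [Submodule.range_subtype, h₂₃])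
  have hr : r₂ - (r₁ - r₀) = r₀ + r₂ - r₁ := by omega
  rw [h₃₄, hr] at g
  refine ⟨by omega, ⟨g⟩, ?_⟩
  obtain ⟨q, hq⟩ := zmod_split n hn _ g (LinearMap.ker φ₄).subtype
    (Submodule.injective_subtype _)
  rw [Submodule.range_subtype] at hq
  exact ⟨q, hq, ⟨(Submodule.quotientEquivOfIsCompl _ q hq).symm.trans φ₄.quotKerEquivRange⟩⟩
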